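/- Let γ ∈ (0,1], σ_α ≥ 0, σ_b ≥ 0, and let φ : ℝ → ℝ be twice continuously differentiable with φ, φ′, φ″ of at most polynomial growth. Suppose q* > 0 satisfies q* = γ(σ_α² ∫ φ(√q* z)² Dz + σ_b²). Then there exist constants K ≥ 0 and ε₀ > 0 such that for all ε ∈ (0, ε₀): |C(1 − ε) − (1 − χ_γ ε)| ≤ K ε^{3/2}; that is, C(1 − ε) = 1 − χ_γ ε + O(ε^{3/2}) as ε → 0⁺. -/

import Mathlib

open MeasureTheory ProbabilityTheory Filter
open scoped NNReal ENNReal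

/-!
For standard Gaussians `X` and `Y` with correlation `cos θ`, Price's theorem says that
`d/dθ E[f(X) g(Y)] = -sin θ E[f'(X) g'(Y)]`: in the rotated coordinates `(Y, W)` with `W = ∂Y/∂θ`
this is Stein's identity `E[W f(W)] = E[f'(W)]`. Applied to `(φ, φ)` and then to `(φ', φ')`,
it shows that as a function of `c = cos θ` the covariance has derivative `E[φ'(X)²]` at `c = 1` and
second derivative at most `E[φ''(X)²]` in absolute value. Working with the angle `θ` avoids the
singularity of `√(1 - c²)` at `c = 1`, and the remainder obtained this way is even of order `ε²`.
-/

/-- Functions bounded by a polynomial in the norm of their argument, which makes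
the continuous ones integrable for every Gaussian measure. -/
def HasPolynomialGrowth {E F : Type*} [Norm E] [Norm F] (f : E → F) : Prop :=
  ∃ (K : ℝ) (k : ℕ), ∀ x, ‖f x‖ ≤ K * (1 + ‖x‖) ^ k

namespace HasPolynomialGrowth

variable {E F R : Type*} [NormedAddCommGroup E] [NormedAddCommGroup F]

lemma exists_nonneg {f : E → F} (hf : HasPolynomialGrowth f) :
    ∃ (K : ℝ) (k : ℕ), 0 ≤ K ∧ ∀ x, ‖f x‖ ≤ K * (1 + ‖x‖) ^ k := by
  obtain ⟨K, k, hK⟩ := hf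
  exact ⟨K, k, by simpa using (norm_nonneg _).trans (hK 0), hK⟩

lemma mul [NormedRing R] {f g : E → R} (hf : HasPolynomialGrowth f)
    (hg : HasPolynomialGrowth g) : HasPolynomialGrowth fun x ↦ f x * g x := by
  obtain ⟨K, k, hK⟩ := hf
  obtain ⟨L, l, hL⟩ := hg
  refine ⟨K * L, k + l, fun x ↦ (norm_mul_le _ _).trans ?_⟩
  calc ‖f x‖ * ‖g x‖ ≤ (K * (1 + ‖x‖) ^ k) * (L * (1 + ‖x‖) ^ l) :=
        mul_le_mul (hK x) (hL x) (norm_nonneg _) ((norm_nonneg _).trans (hK x))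
    _ = K * L * (1 + ‖x‖) ^ (k + l) := by ring

lemma comp {G : Type*} [Norm G] {f : F → G} {g : E → F} (hf : HasPolynomialGrowth f)
    (hg : HasPolynomialGrowth g) : HasPolynomialGrowth fun x ↦ f (g x) := by
  obtain ⟨K, k, hK⟩ := hf
  obtain ⟨L, l, hL⟩ := hg
  refine ⟨|K| * (1 + L) ^ k, l * k, fun x ↦ ?_⟩
  have hone : 1 ≤ (1 + ‖x‖) ^ l := one_le_pow₀ (by simp)
  calc ‖f (g x)‖ ≤ |K| * (1 + ‖g x‖) ^ k := (hK _).trans (by gcongr; exact le_abs_self K)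
    _ ≤ |K| * ((1 + L) * (1 + ‖x‖) ^ l) ^ k := by gcongr; linarith [hL x]
    _ = |K| * (1 + L) ^ k * (1 + ‖x‖) ^ (l * k) := by rw [mul_pow, ← pow_mul, mul_assoc]

lemma continuousLinearMap [NormedSpace ℝ E] [NormedSpace ℝ F] (L : E →L[ℝ] F) :
    HasPolynomialGrowth L :=
  ⟨‖L‖, 1, fun x ↦ (L.le_opNorm x).trans (by gcongr; simp)⟩

lemma comp_continuousLinearMap [NormedSpace ℝ E] [NormedSpace ℝ F] {G : Type*} [Norm G]
    {f : F → G} (hf : HasPolynomialGrowth f) (L : E →L[ℝ] F) :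
    HasPolynomialGrowth fun x ↦ f (L x) :=
  hf.comp (.continuousLinearMap L)

lemma of_deriv [NormedSpace ℝ F] {f : ℝ → F} (hf : Differentiable ℝ f)
    (hf' : HasPolynomialGrowth (deriv f)) : HasPolynomialGrowth f := by
  obtain ⟨K, k, hK0, hK⟩ := hf'.exists_nonneg
  refine ⟨‖f 0‖ + K, k + 1, fun x ↦ ?_⟩
  have hball : ∀ t ∈ Metric.closedBall (0 : ℝ) ‖x‖, ‖deriv f t‖ ≤ K * (1 + ‖x‖) ^ k := by
    intro t ht
    have htx : ‖t‖ ≤ ‖x‖ := mem_closedBall_zero_iff.mp ht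
    exact (hK t).trans (by gcongr)
  have hincr : ‖f x - f 0‖ ≤ K * (1 + ‖x‖) ^ k * ‖x - 0‖ :=
    (convex_closedBall 0 ‖x‖).norm_image_sub_le_of_norm_deriv_le (fun t _ ↦ hf t) hball
      (by simp) (by simp)
  have hone : 1 ≤ (1 + ‖x‖) ^ (k + 1) := one_le_pow₀ (by simp)
  calc ‖f x‖ ≤ ‖f 0‖ + ‖f x - f 0‖ := norm_le_insert' _ _
    _ ≤ ‖f 0‖ * (1 + ‖x‖) ^ (k + 1) + K * (1 + ‖x‖) ^ k * (1 + ‖x‖) :=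
      add_le_add (le_mul_of_one_le_right (norm_nonneg _) hone) (hincr.trans (by gcongr; simp))
    _ = (‖f 0‖ + K) * (1 + ‖x‖) ^ (k + 1) := by ring

end HasPolynomialGrowth

section GaussianMoments

variable {E F : Type*} [NormedAddCommGroup E] [NormedSpace ℝ E] [CompleteSpace E]
  [SecondCountableTopology E] [MeasurableSpace E] [BorelSpace E] [NormedAddCommGroup F]

lemma integrable_one_add_norm_pow_of_isGaussian (μ : Measure E) [IsGaussian μ] (k : ℕ) :
    Integrable (fun x ↦ (1 + ‖x‖) ^ k) μ := by
  have hnorm : MemLp (fun x : E ↦ ‖x‖) k μ :=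
    (IsGaussian.memLp_id μ k (ENNReal.natCast_ne_top k)).norm
  have hmem : MemLp (fun x : E ↦ 1 + ‖x‖) k μ := (memLp_const (1 : ℝ)).add hnorm
  refine hmem.integrable_norm_pow'.congr (ae_of_all _ fun x ↦ ?_)
  simp only [Real.norm_of_nonneg (by positivity : 0 ≤ 1 + ‖x‖)]

lemma HasPolynomialGrowth.integrable {f : E → F} (hf : HasPolynomialGrowth f)
    (hfc : Continuous f) (μ : Measure E) [IsGaussian μ] : Integrable f μ := by
  obtain ⟨K, k, hK⟩ := hf
  exact ((integrable_one_add_norm_pow_of_isGaussian μ k).const_mul K).mono'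
    hfc.aestronglyMeasurable (ae_of_all _ hK)

end GaussianMoments

lemma hasDerivAt_gaussianPDFReal (m : ℝ) (v : ℝ≥0) (x : ℝ) :
    HasDerivAt (gaussianPDFReal m v) (-((x - m) / v) * gaussianPDFReal m v x) x := by
  have hexponent : HasDerivAt (fun y ↦ -(y - m) ^ 2 / (2 * v)) (-((x - m) / v)) x := by
    refine ((((hasDerivAt_id' x).sub_const m).pow 2).neg.div_const (2 * (v : ℝ))).congr_deriv ?_
    field
  exact (hexponent.exp.const_mul _).congr_deriv (by rw [gaussianPDFReal]; ring)

lemma integrable_gaussianReal_iff {F : Type*} [NormedAddCommGroup F] [NormedSpace ℝ F]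
    {m : ℝ} {v : ℝ≥0} (hv : v ≠ 0) {f : ℝ → F} :
    Integrable f (gaussianReal m v) ↔ Integrable fun x ↦ gaussianPDFReal m v x • f x := by
  rw [gaussianReal_of_var_ne_zero m hv,
    integrable_withDensity_iff_integrable_smul' (measurable_gaussianPDF m v)
      (ae_of_all _ fun _ ↦ gaussianPDF_lt_top)]
  simp only [toReal_gaussianPDF]

theorem integral_sub_mul_gaussianReal {m : ℝ} {v : ℝ≥0} {f f' : ℝ → ℝ}
    (hderiv : ∀ x, HasDerivAt f (f' x) x) (hf : Integrable f (gaussianReal m v))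
    (hxf : Integrable (fun x ↦ (x - m) * f x) (gaussianReal m v))
    (hf' : Integrable f' (gaussianReal m v)) :
    ∫ x, (x - m) * f x ∂(gaussianReal m v) = v * ∫ x, f' x ∂(gaussianReal m v) := by
  rcases eq_or_ne v 0 with rfl | hv
  · simp [gaussianReal_zero_var]
  have hpdf : ∀ x, HasDerivAt (fun x ↦ gaussianPDFReal m v x • f x)
      (gaussianPDFReal m v x • (f' x - (v : ℝ)⁻¹ * ((x - m) * f x))) x := fun x ↦
    ((hasDerivAt_gaussianPDFReal m v x).mul (hderiv x)).congr_deriv (by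
      simp only [smul_eq_mul]; ring)
  have hint := hf'.sub (hxf.const_mul (v : ℝ)⁻¹)
  have hzero := integral_eq_zero_of_hasDerivAt_of_integrable hpdf
    ((integrable_gaussianReal_iff hv).mp hint) ((integrable_gaussianReal_iff hv).mp hf)
  rw [← integral_gaussianReal_eq_integral_smul hv, integral_sub hf' (hxf.const_mul _),
    integral_const_mul, sub_eq_zero] at hzero
  rw [hzero, mul_inv_cancel_left₀ (NNReal.coe_ne_zero.mpr hv)]

lemma integral_mul_comp_add_mul_gaussianReal (v : ℝ≥0) {f : ℝ → ℝ} (hf : ContDiff ℝ 1 f)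
    (hf' : HasPolynomialGrowth (deriv f)) (a b : ℝ) :
    ∫ x, x * f (a + b * x) ∂(gaussianReal 0 v)
      = v * b * ∫ x, deriv f (a + b * x) ∂(gaussianReal 0 v) := by
  have hfc : Continuous f := hf.continuous
  have haffine : HasPolynomialGrowth fun x : ℝ ↦ a + b * x :=
    .of_deriv (by fun_prop) ⟨|b|, 0, by simp⟩
  have hfab : HasPolynomialGrowth fun x ↦ f (a + b * x) :=
    (HasPolynomialGrowth.of_deriv (hf.differentiable one_ne_zero) hf').comp haffine
  have hxfab : HasPolynomialGrowth fun x ↦ x * f (a + b * x) :=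
    (HasPolynomialGrowth.continuousLinearMap (.id ℝ ℝ)).mul hfab
  have hderiv : ∀ x, HasDerivAt (fun x ↦ f (a + b * x)) (deriv f (a + b * x) * b) x := fun x ↦
    (hf.differentiable one_ne_zero _).hasDerivAt.comp x
      (((hasDerivAt_id' x).const_mul b).const_add a |>.congr_deriv (mul_one b))
  have hstein := integral_sub_mul_gaussianReal (m := 0) (v := v) hderiv
    (hfab.integrable (by fun_prop) _)
    (by simpa only [sub_zero] using hxfab.integrable (by fun_prop) _)
    (((hf'.comp haffine).integrable (by fun_prop) _).mul_const b)
  simp only [sub_zero, integral_mul_const] at hstein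
  rw [hstein]
  ring

lemma measurePreserving_rotation_gaussianReal (v : ℝ≥0) (θ : ℝ) :
    MeasurePreserving (ContinuousLinearMap.rotation θ : ℝ × ℝ →L[ℝ] ℝ × ℝ)
      ((gaussianReal 0 v).prod (gaussianReal 0 v)) ((gaussianReal 0 v).prod (gaussianReal 0 v)) :=
  ⟨by fun_prop, IsGaussian.map_rotation_eq_self (by simp) θ⟩

lemma integral_comp_rotation_gaussianReal (v : ℝ≥0) (θ : ℝ) {h : ℝ × ℝ → ℝ}
    (hh : AEStronglyMeasurable h ((gaussianReal 0 v).prod (gaussianReal 0 v))) :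
    ∫ p, h (ContinuousLinearMap.rotation θ p) ∂((gaussianReal 0 v).prod (gaussianReal 0 v))
      = ∫ p, h p ∂((gaussianReal 0 v).prod (gaussianReal 0 v)) := by
  have hrot := measurePreserving_rotation_gaussianReal v θ
  rw [← integral_map hrot.aemeasurable (by rwa [hrot.map_eq]), hrot.map_eq]

lemma norm_rotation_apply_le {E : Type*} [NormedAddCommGroup E] [NormedSpace ℝ E] (θ : ℝ)
    (p : E × E) : ‖ContinuousLinearMap.rotation θ p‖ ≤ 2 * ‖p‖ := by
  have hcomb : ∀ a b : ℝ, |a| ≤ 1 → |b| ≤ 1 → ‖a • p.1 + b • p.2‖ ≤ 2 * ‖p‖ := by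
    intro a b ha hb
    calc ‖a • p.1 + b • p.2‖ ≤ |a| * ‖p.1‖ + |b| * ‖p.2‖ := by
          simpa only [norm_smul, Real.norm_eq_abs] using norm_add_le (a • p.1) (b • p.2)
      _ ≤ 1 * ‖p‖ + 1 * ‖p‖ := by gcongr <;> [exact norm_fst_le p; exact norm_snd_le p]
      _ = 2 * ‖p‖ := by ring
  exact max_le (hcomb _ _ (Real.abs_cos_le_one θ) (Real.abs_sin_le_one θ))
    (hcomb _ _ ((abs_neg _).trans_le (Real.abs_sin_le_one θ)) (Real.abs_cos_le_one θ))

lemma rotation_neg_rotation_apply {E : Type*} [NormedAddCommGroup E] [NormedSpace ℝ E] (θ : ℝ)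
    (p : E × E) :
    ContinuousLinearMap.rotation (-θ) (ContinuousLinearMap.rotation θ p) = p := by
  have h := Real.cos_sq_add_sin_sq θ
  ext <;> simp only [ContinuousLinearMap.rotation_apply, Real.cos_neg, Real.sin_neg]
  · linear_combination (norm := module) h • p.1
  · linear_combination (norm := module) h • p.2

lemma hasDerivAt_rotation_fst {E : Type*} [NormedAddCommGroup E] [NormedSpace ℝ E] (p : E × E)
    (θ : ℝ) :
    HasDerivAt (fun θ ↦ (ContinuousLinearMap.rotation θ p).1)
      (ContinuousLinearMap.rotation θ p).2 θ :=
  ((Real.hasDerivAt_cos θ).smul_const p.1).add ((Real.hasDerivAt_sin θ).smul_const p.2)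

/-- `E[f(X) g(Y)]` for centered Gaussians `X`, `Y` of variance `v` and correlation `cos θ`,
realized by letting `Y` be the first coordinate of the rotation by `θ` of a pair of independent
Gaussians whose first coordinate is `X`. -/
noncomputable def gaussianCorrelation (v : ℝ≥0) (f g : ℝ → ℝ) (θ : ℝ) : ℝ :=
  ∫ p, f p.1 * g (ContinuousLinearMap.rotation θ p).1
    ∂((gaussianReal 0 v).prod (gaussianReal 0 v))

lemma gaussianCorrelation_zero (v : ℝ≥0) (f g : ℝ → ℝ) :
    gaussianCorrelation v f g 0 = ∫ x, f x * g x ∂(gaussianReal 0 v) := by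
  simpa [gaussianCorrelation, ContinuousLinearMap.rotation_apply] using
    integral_fun_fst (μ := gaussianReal 0 v) (ν := gaussianReal 0 v) (fun x ↦ f x * g x)

lemma HasPolynomialGrowth.mul_rotation {f g : ℝ → ℝ} (hf : HasPolynomialGrowth f)
    (hg : HasPolynomialGrowth g) (θ : ℝ) :
    HasPolynomialGrowth fun p : ℝ × ℝ ↦ f p.1 * g (ContinuousLinearMap.rotation θ p).1 :=
  (hf.comp_continuousLinearMap (.fst ℝ ℝ ℝ)).mul
    (hg.comp_continuousLinearMap ((ContinuousLinearMap.fst ℝ ℝ ℝ).comp (.rotation θ)))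

lemma gaussianCorrelation_eq_integral_integral (v : ℝ≥0) {f g : ℝ → ℝ} (hfc : Continuous f)
    (hgc : Continuous g) (hf : HasPolynomialGrowth f) (hg : HasPolynomialGrowth g) (θ : ℝ) :
    gaussianCorrelation v f g θ
      = ∫ x, ∫ y, f x * g (Real.cos θ * x + Real.sin θ * y)
          ∂(gaussianReal 0 v) ∂(gaussianReal 0 v) :=
  integral_prod _ ((hf.mul_rotation hg θ).integrable (by fun_prop) _)

lemma abs_gaussianCorrelation_self_le (v : ℝ≥0) {f : ℝ → ℝ}
    (hf : Integrable (fun x ↦ f x ^ 2) (gaussianReal 0 v)) (θ : ℝ) :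
    |gaussianCorrelation v f f θ| ≤ ∫ x, f x ^ 2 ∂(gaussianReal 0 v) := by
  have hfst : Integrable (fun p : ℝ × ℝ ↦ f p.1 ^ 2)
      ((gaussianReal 0 v).prod (gaussianReal 0 v)) := hf.comp_fst _
  have hrot : Integrable (fun p : ℝ × ℝ ↦ f (ContinuousLinearMap.rotation θ p).1 ^ 2)
      ((gaussianReal 0 v).prod (gaussianReal 0 v)) :=
    (measurePreserving_rotation_gaussianReal v θ).integrable_comp_of_integrable hfst
  have hfst_eq : ∫ p, f p.1 ^ 2 ∂((gaussianReal 0 v).prod (gaussianReal 0 v))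
      = ∫ x, f x ^ 2 ∂(gaussianReal 0 v) := by
    simpa using integral_fun_fst (μ := gaussianReal 0 v) (ν := gaussianReal 0 v) (fun x ↦ f x ^ 2)
  have hrot_eq := integral_comp_rotation_gaussianReal v θ hfst.aestronglyMeasurable
  calc |gaussianCorrelation v f f θ|
      ≤ ∫ p : ℝ × ℝ, (f p.1 ^ 2 + f (ContinuousLinearMap.rotation θ p).1 ^ 2) / 2
          ∂((gaussianReal 0 v).prod (gaussianReal 0 v)) := by
        rw [← Real.norm_eq_abs, gaussianCorrelation]
        refine norm_integral_le_of_norm_le ((hfst.add hrot).div_const 2) (ae_of_all _ fun p ↦ ?_)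
        rw [Real.norm_eq_abs, abs_le]
        constructor <;> nlinarith [sq_nonneg (f p.1 + f (ContinuousLinearMap.rotation θ p).1),
          sq_nonneg (f p.1 - f (ContinuousLinearMap.rotation θ p).1)]
    _ = ∫ x, f x ^ 2 ∂(gaussianReal 0 v) := by
        rw [integral_div, integral_add hfst hrot, hrot_eq, hfst_eq, add_self_div_two]

lemma integral_rotation_fst_mul_snd_gaussianReal (v : ℝ≥0) {f g : ℝ → ℝ} (hf : ContDiff ℝ 1 f)
    (hgc : Continuous g) (hf' : HasPolynomialGrowth (deriv f)) (hg : HasPolynomialGrowth g)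
    (θ : ℝ) :
    ∫ p, f (ContinuousLinearMap.rotation θ p).1 * (g p.1 * p.2)
        ∂((gaussianReal 0 v).prod (gaussianReal 0 v))
      = v * Real.sin θ * ∫ p, deriv f (ContinuousLinearMap.rotation θ p).1 * g p.1
        ∂((gaussianReal 0 v).prod (gaussianReal 0 v)) := by
  have hfc : Continuous f := hf.continuous
  have hf_growth : HasPolynomialGrowth f := .of_deriv (hf.differentiable one_ne_zero) hf'
  let R₁ : ℝ × ℝ →L[ℝ] ℝ := (ContinuousLinearMap.fst ℝ ℝ ℝ).comp (.rotation θ)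
  have hg_fst : HasPolynomialGrowth fun p : ℝ × ℝ ↦ g p.1 :=
    hg.comp_continuousLinearMap (.fst ℝ ℝ ℝ)
  have hleft : HasPolynomialGrowth fun p ↦
      f (ContinuousLinearMap.rotation θ p).1 * (g p.1 * p.2) :=
    (hf_growth.comp_continuousLinearMap R₁).mul
      (hg_fst.mul (.continuousLinearMap (.snd ℝ ℝ ℝ)))
  have hright : HasPolynomialGrowth fun p ↦
      deriv f (ContinuousLinearMap.rotation θ p).1 * g p.1 :=
    (hf'.comp_continuousLinearMap R₁).mul hg_fst
  have hstein : ∀ y,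
      ∫ w, f (Real.cos θ * y + Real.sin θ * w) * (g y * w) ∂(gaussianReal 0 v)
        = v * Real.sin θ * ∫ w, deriv f (Real.cos θ * y + Real.sin θ * w) * g y
          ∂(gaussianReal 0 v) := by
    intro y
    calc ∫ w, f (Real.cos θ * y + Real.sin θ * w) * (g y * w) ∂(gaussianReal 0 v)
        = g y * ∫ w, w * f (Real.cos θ * y + Real.sin θ * w) ∂(gaussianReal 0 v) := by
          rw [← integral_const_mul]
          congr! 2
          ring
      _ = v * Real.sin θ * ∫ w, deriv f (Real.cos θ * y + Real.sin θ * w) * g y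
            ∂(gaussianReal 0 v) := by
          rw [integral_mul_comp_add_mul_gaussianReal v hf hf', integral_mul_const]
          ring
  rw [integral_prod _ (hleft.integrable (by fun_prop) _),
    integral_prod _ (hright.integrable (by fun_prop) _), ← integral_const_mul]
  exact integral_congr_ae (ae_of_all _ hstein)

lemma integral_mul_rotation_snd_gaussianReal (v : ℝ≥0) {f g : ℝ → ℝ} (hf : ContDiff ℝ 1 f)
    (hgc : Continuous g) (hf' : HasPolynomialGrowth (deriv f)) (hg : HasPolynomialGrowth g)
    (θ : ℝ) :
    ∫ p, f p.1 * (g (ContinuousLinearMap.rotation θ p).1 * (ContinuousLinearMap.rotation θ p).2)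
        ∂((gaussianReal 0 v).prod (gaussianReal 0 v))
      = -(v * Real.sin θ) * gaussianCorrelation v (deriv f) g θ := by
  have hfc : Continuous f := hf.continuous
  have hstein := integral_rotation_fst_mul_snd_gaussianReal v hf hgc hf' hg (-θ)
  rw [← integral_comp_rotation_gaussianReal v θ (Continuous.aestronglyMeasurable (by fun_prop)),
    ← integral_comp_rotation_gaussianReal v θ
      (h := fun p ↦ deriv f (ContinuousLinearMap.rotation (-θ) p).1 * g p.1)
      (Continuous.aestronglyMeasurable (by fun_prop))] at hstein
  simpa only [gaussianCorrelation, rotation_neg_rotation_apply, Real.sin_neg, mul_neg] using hstein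

lemma HasPolynomialGrowth.exists_norm_mul_rotation_le {f g : ℝ → ℝ} (hf : HasPolynomialGrowth f)
    (hg : HasPolynomialGrowth g) :
    ∃ (K : ℝ) (k : ℕ), ∀ θ (p : ℝ × ℝ), ‖f p.1 * (g (ContinuousLinearMap.rotation θ p).1
      * (ContinuousLinearMap.rotation θ p).2)‖ ≤ K * (1 + ‖p‖) ^ k := by
  have hprod : HasPolynomialGrowth fun q : (ℝ × ℝ) × ℝ × ℝ ↦ f q.1.1 * (g q.2.1 * q.2.2) :=
    (hf.comp_continuousLinearMap
      ((ContinuousLinearMap.fst ℝ ℝ ℝ).comp (.fst ℝ (ℝ × ℝ) (ℝ × ℝ)))).mul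
    ((hg.comp_continuousLinearMap
      ((ContinuousLinearMap.fst ℝ ℝ ℝ).comp (.snd ℝ (ℝ × ℝ) (ℝ × ℝ)))).mul
    (.continuousLinearMap ((ContinuousLinearMap.snd ℝ ℝ ℝ).comp (.snd ℝ (ℝ × ℝ) (ℝ × ℝ)))))
  obtain ⟨K, k, hK0, hK⟩ := hprod.exists_nonneg
  refine ⟨K * 2 ^ k, k, fun θ p ↦ ?_⟩
  have hnorm : ‖(p, ContinuousLinearMap.rotation θ p)‖ ≤ 2 * ‖p‖ :=
    max_le (by linarith [norm_nonneg p]) (norm_rotation_apply_le θ p)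
  calc ‖f p.1 * (g (ContinuousLinearMap.rotation θ p).1 * (ContinuousLinearMap.rotation θ p).2)‖
      ≤ K * (1 + ‖(p, ContinuousLinearMap.rotation θ p)‖) ^ k :=
        hK (p, ContinuousLinearMap.rotation θ p)
    _ ≤ K * (2 * (1 + ‖p‖)) ^ k := by gcongr; linarith
    _ = K * 2 ^ k * (1 + ‖p‖) ^ k := by rw [mul_pow, mul_assoc]

theorem hasDerivAt_gaussianCorrelation (v : ℝ≥0) {f g : ℝ → ℝ} (hf : ContDiff ℝ 1 f)
    (hg : ContDiff ℝ 1 g) (hf' : HasPolynomialGrowth (deriv f))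
    (hg' : HasPolynomialGrowth (deriv g)) (θ : ℝ) :
    HasDerivAt (gaussianCorrelation v f g)
      (-(v * Real.sin θ) * gaussianCorrelation v (deriv f) (deriv g) θ) θ := by
  have hfc : Continuous f := hf.continuous
  have hgc : Continuous g := hg.continuous
  have hg'c : Continuous (deriv g) := hg.continuous_deriv le_rfl
  have hf_growth : HasPolynomialGrowth f := .of_deriv (hf.differentiable one_ne_zero) hf'
  have hg_growth : HasPolynomialGrowth g := .of_deriv (hg.differentiable one_ne_zero) hg'
  obtain ⟨K, k, hK⟩ := hf_growth.exists_norm_mul_rotation_le hg'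
  rw [← integral_mul_rotation_snd_gaussianReal v hf hg'c hf' hg' θ]
  refine (hasDerivAt_integral_of_dominated_loc_of_deriv_le univ_mem
    (.of_forall fun t ↦ Continuous.aestronglyMeasurable (by fun_prop))
    ((hf_growth.mul_rotation hg_growth θ).integrable (by fun_prop) _)
    (Continuous.aestronglyMeasurable (by fun_prop)) (ae_of_all _ fun p t _ ↦ hK t p)
    ((integrable_one_add_norm_pow_of_isGaussian _ k).const_mul _)
    (ae_of_all _ fun p t _ ↦ ?_)).2
  exact ((hg.differentiable one_ne_zero _).hasDerivAt.comp t
    (hasDerivAt_rotation_fst p t)).const_mul (f p.1)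

lemma abs_gaussianCorrelation_self_sub_zero_le (v : ℝ≥0) {f : ℝ → ℝ} (hf : ContDiff ℝ 1 f)
    (hf' : HasPolynomialGrowth (deriv f)) {θ : ℝ} (hθ : θ ∈ Set.Icc 0 Real.pi) :
    |gaussianCorrelation v f f θ - gaussianCorrelation v f f 0|
      ≤ v * (∫ x, deriv f x ^ 2 ∂(gaussianReal 0 v)) * (1 - Real.cos θ) := by
  have hint : Integrable (fun x ↦ deriv f x ^ 2) (gaussianReal 0 v) := by
    simpa only [sq] using (hf'.mul hf').integrable
      ((hf.continuous_deriv le_rfl).mul (hf.continuous_deriv le_rfl)) _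
  have hderiv := fun t ↦ (hasDerivAt_gaussianCorrelation v hf hf hf' hf' t).sub_const
    (gaussianCorrelation v f f 0)
  refine image_norm_le_of_norm_deriv_right_le_deriv_boundary
    (HasDerivAt.continuousOn fun t _ ↦ hderiv t) (fun t _ ↦ (hderiv t).hasDerivWithinAt)
    (by simp) (fun t ↦ ((Real.hasDerivAt_cos t).const_sub 1).const_mul _) (fun t ht ↦ ?_) hθ
  have hsin : 0 ≤ Real.sin t := Real.sin_nonneg_of_mem_Icc (Set.Ico_subset_Icc_self ht)
  rw [Real.norm_eq_abs, abs_mul, abs_neg, abs_of_nonneg (by positivity)]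
  calc v * Real.sin t * |gaussianCorrelation v (deriv f) (deriv f) t|
      ≤ v * Real.sin t * ∫ x, deriv f x ^ 2 ∂(gaussianReal 0 v) := by
        gcongr; exact abs_gaussianCorrelation_self_le v hint t
    _ = v * (∫ x, deriv f x ^ 2 ∂(gaussianReal 0 v)) * - -Real.sin t := by ring

theorem abs_gaussianCorrelation_self_sub_first_order_le (v : ℝ≥0) {f : ℝ → ℝ}
    (hf : ContDiff ℝ 2 f) (hf'' : HasPolynomialGrowth (deriv (deriv f))) {θ : ℝ}
    (hθ : θ ∈ Set.Icc 0 Real.pi) :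
    |gaussianCorrelation v f f θ
        - (gaussianCorrelation v f f 0
          - v * (1 - Real.cos θ) * gaussianCorrelation v (deriv f) (deriv f) 0)|
      ≤ v ^ 2 * (∫ x, deriv (deriv f) x ^ 2 ∂(gaussianReal 0 v)) / 2 * (1 - Real.cos θ) ^ 2 := by
  have hf1 : ContDiff ℝ 1 (deriv f) := ContDiff.deriv' (n := 1) hf
  have hf' : HasPolynomialGrowth (deriv f) := .of_deriv (hf1.differentiable one_ne_zero) hf''
  have hf_one : ContDiff ℝ 1 f := hf.of_le one_le_two
  have hderiv := fun t ↦ (hasDerivAt_gaussianCorrelation v hf_one hf_one hf' hf' t).sub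
    (((((Real.hasDerivAt_cos t).const_sub 1).const_mul (v : ℝ)).mul_const
      (gaussianCorrelation v (deriv f) (deriv f) 0)).const_sub (gaussianCorrelation v f f 0))
  refine image_norm_le_of_norm_deriv_right_le_deriv_boundary
    (HasDerivAt.continuousOn fun t _ ↦ hderiv t) (fun t _ ↦ (hderiv t).hasDerivWithinAt)
    (by simp) (fun t ↦ (((Real.hasDerivAt_cos t).const_sub 1).pow 2).const_mul _)
    (fun t ht ↦ ?_) hθ
  have htπ : t ∈ Set.Icc 0 Real.pi := Set.Ico_subset_Icc_self ht
  have hv_sin : 0 ≤ v * Real.sin t := mul_nonneg v.2 (Real.sin_nonneg_of_mem_Icc htπ)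
  calc ‖-(v * Real.sin t) * gaussianCorrelation v (deriv f) (deriv f) t
          - -(v * - -Real.sin t * gaussianCorrelation v (deriv f) (deriv f) 0)‖
      = ‖v * Real.sin t * (gaussianCorrelation v (deriv f) (deriv f) t
          - gaussianCorrelation v (deriv f) (deriv f) 0)‖ := by
        rw [← norm_neg]
        ring_nf
    _ = v * Real.sin t * |gaussianCorrelation v (deriv f) (deriv f) t
          - gaussianCorrelation v (deriv f) (deriv f) 0| := by
        rw [Real.norm_eq_abs, abs_mul, abs_of_nonneg hv_sin]
    _ ≤ v * Real.sin t * (v * (∫ x, deriv (deriv f) x ^ 2 ∂(gaussianReal 0 v))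
          * (1 - Real.cos t)) := by
        gcongr; exact abs_gaussianCorrelation_self_sub_zero_le v hf1 hf'' htπ
    _ = v ^ 2 * (∫ x, deriv (deriv f) x ^ 2 ∂(gaussianReal 0 v)) / 2
          * ((2 : ℕ) * (1 - Real.cos t) ^ (2 - 1) * - -Real.sin t) := by
        simp only [Nat.cast_ofNat]
        ring

theorem abs_integral_mul_comp_sub_first_order_le (v : ℝ≥0) {f : ℝ → ℝ} (hf : ContDiff ℝ 2 f)
    (hf'' : HasPolynomialGrowth (deriv (deriv f))) {ε : ℝ} (hε : ε ∈ Set.Icc 0 2) :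
    |(∫ x, ∫ y, f x * f ((1 - ε) * x + √(1 - (1 - ε) ^ 2) * y)
          ∂(gaussianReal 0 v) ∂(gaussianReal 0 v))
        - (∫ x, f x ^ 2 ∂(gaussianReal 0 v) - v * ε * ∫ x, deriv f x ^ 2 ∂(gaussianReal 0 v))|
      ≤ v ^ 2 * (∫ x, deriv (deriv f) x ^ 2 ∂(gaussianReal 0 v)) / 2 * ε ^ 2 := by
  have hf' : HasPolynomialGrowth (deriv f) := .of_deriv hf.differentiable_deriv_two hf''
  have hf_growth : HasPolynomialGrowth f := .of_deriv (hf.differentiable two_ne_zero) hf'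
  have hcos : Real.cos (Real.arccos (1 - ε)) = 1 - ε :=
    Real.cos_arccos (by linarith [hε.2]) (by linarith [hε.1])
  have hexpansion := abs_gaussianCorrelation_self_sub_first_order_le v hf hf''
    ⟨Real.arccos_nonneg (1 - ε), Real.arccos_le_pi (1 - ε)⟩
  rw [gaussianCorrelation_zero, gaussianCorrelation_zero,
    gaussianCorrelation_eq_integral_integral v hf.continuous hf.continuous hf_growth hf_growth]
    at hexpansion
  simpa only [hcos, Real.sin_arccos, sub_sub_cancel, ← sq] using hexpansion

lemma integral_comp_sqrt_mul_gaussianReal {E : Type*} [NormedAddCommGroup E] [NormedSpace ℝ E]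
    {v : ℝ≥0} (hv : v ≠ 0) (f : ℝ → E) :
    ∫ z, f (√v * z) ∂(gaussianReal 0 1) = ∫ x, f x ∂(gaussianReal 0 v) := by
  have hmap : (gaussianReal 0 1).map (√v * ·) = gaussianReal 0 v := by
    rw [gaussianReal_map_const_mul]
    congr 1
    · simp
    · ext; simp
  have hsqrt : √(v : ℝ) ≠ 0 := by positivity
  rw [← hmap, (measurableEmbedding_mulLeft₀ hsqrt).integral_map]

lemma integral_integral_sqrt_mul_gaussianReal {v : ℝ≥0} (hv : v ≠ 0) (f g : ℝ → ℝ) (a b : ℝ) :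
    ∫ z₁, ∫ z₂, f (√v * z₁) * g (√v * (a * z₁ + b * z₂)) ∂(gaussianReal 0 1) ∂(gaussianReal 0 1)
      = ∫ x, ∫ y, f x * g (a * x + b * y) ∂(gaussianReal 0 v) ∂(gaussianReal 0 v) := by
  simp only [← integral_comp_sqrt_mul_gaussianReal hv, mul_add, mul_left_comm]

theorem correlation_map_expansion_at_one_general {γ σα σb qs : ℝ} (hqs : 0 < qs) {φ : ℝ → ℝ}
    (hφ : ContDiff ℝ 2 φ) (hφ'' : HasPolynomialGrowth (deriv (deriv φ)))
    (hfix : qs = γ * (σα ^ 2 * ∫ z, (φ (√qs * z)) ^ 2 ∂(gaussianReal 0 1) + σb ^ 2))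
    {ε : ℝ} (hε : ε ∈ Set.Icc 0 2) :
    |(γ / qs) * (σα ^ 2 *
        ∫ z₁, ∫ z₂, φ (√qs * z₁) * φ (√qs * ((1 - ε) * z₁ + √(1 - (1 - ε) ^ 2) * z₂))
          ∂(gaussianReal 0 1) ∂(gaussianReal 0 1) + σb ^ 2) -
      (1 - (γ * σα ^ 2 * ∫ z, (deriv φ (√qs * z)) ^ 2 ∂(gaussianReal 0 1)) * ε)|
      ≤ γ * σα ^ 2 * qs / 2 * (∫ z, deriv (deriv φ) (√qs * z) ^ 2 ∂(gaussianReal 0 1))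
        * ε ^ 2 := by
  have hγ : 0 < γ := pos_of_mul_pos_left (hfix ▸ hqs) (by positivity)
  lift qs to ℝ≥0 using hqs.le with v
  have hv : v ≠ 0 := (NNReal.coe_pos.mp hqs).ne'
  have hv' : (v : ℝ) ≠ 0 := hqs.ne'
  rw [integral_integral_sqrt_mul_gaussianReal hv,
    integral_comp_sqrt_mul_gaussianReal hv fun x ↦ deriv φ x ^ 2,
    integral_comp_sqrt_mul_gaussianReal hv fun x ↦ deriv (deriv φ) x ^ 2]
  rw [integral_comp_sqrt_mul_gaussianReal hv fun x ↦ φ x ^ 2] at hfix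
  have hcov := abs_integral_mul_comp_sub_first_order_le v hφ hφ'' hε
  set A := ∫ x, ∫ y, φ x * φ ((1 - ε) * x + √(1 - (1 - ε) ^ 2) * y)
    ∂(gaussianReal 0 v) ∂(gaussianReal 0 v)
  set M₀ := ∫ x, φ x ^ 2 ∂(gaussianReal 0 v)
  set M₁ := ∫ x, deriv φ x ^ 2 ∂(gaussianReal 0 v)
  set M₂ := ∫ x, deriv (deriv φ) x ^ 2 ∂(gaussianReal 0 v)
  calc |γ / v * (σα ^ 2 * A + σb ^ 2) - (1 - γ * σα ^ 2 * M₁ * ε)|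
      = |γ * σα ^ 2 / v * (A - (M₀ - v * ε * M₁))| := by
        congr 1
        field_simp
        linear_combination -hfix
    _ = γ * σα ^ 2 / v * |A - (M₀ - v * ε * M₁)| := by
        rw [abs_mul, abs_of_nonneg (by positivity)]
    _ ≤ γ * σα ^ 2 / v * (v ^ 2 * M₂ / 2 * ε ^ 2) := by gcongr
    _ = γ * σα ^ 2 * v / 2 * M₂ * ε ^ 2 := by field

/-- at the fixed point q* of the length map, the correlation map satisfies
C(1 − ε) = 1 − χ_γ ε + O(ε^{3/2}) as ε → 0⁺, where
C(c) = (γ/q*)(σα² ∫∫ φ(√q* z₁) φ(√q*(c z₁ + √(1−c²) z₂)) Dz₁ Dz₂ + σb²) and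
χ_γ = γ σα² ∫ (φ′(√q* z))² Dz. -/
theorem correlation_map_expansion_at_one
    (γ σα σb qs : ℝ) (hγ : γ ∈ Set.Ioc (0 : ℝ) 1) (hσα : 0 ≤ σα) (hσb : 0 ≤ σb)
    (hqs : 0 < qs)
    (φ : ℝ → ℝ) (hφ : ContDiff ℝ 2 φ)
    (hφgrowth : ∃ (K : ℝ) (k : ℕ), ∀ x : ℝ, |φ x| ≤ K * (1 + |x|) ^ k)
    (hφ'growth : ∃ (K : ℝ) (k : ℕ), ∀ x : ℝ, |deriv φ x| ≤ K * (1 + |x|) ^ k)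
    (hφ''growth : ∃ (K : ℝ) (k : ℕ), ∀ x : ℝ, |deriv (deriv φ) x| ≤ K * (1 + |x|) ^ k)
    (hfix : qs = γ * (σα ^ 2 * ∫ z, (φ (Real.sqrt qs * z)) ^ 2 ∂(gaussianReal 0 1) + σb ^ 2)) :
    ∃ (K : ℝ) (ε₀ : ℝ), 0 ≤ K ∧ 0 < ε₀ ∧ ∀ ε ∈ Set.Ioo (0 : ℝ) ε₀,
      |(γ / qs) * (σα ^ 2 *
          ∫ z₁, ∫ z₂, φ (Real.sqrt qs * z₁) *
            φ (Real.sqrt qs * ((1 - ε) * z₁ + Real.sqrt (1 - (1 - ε) ^ 2) * z₂))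
            ∂(gaussianReal 0 1) ∂(gaussianReal 0 1) + σb ^ 2) -
        (1 - (γ * σα ^ 2 * ∫ z, (deriv φ (Real.sqrt qs * z)) ^ 2 ∂(gaussianReal 0 1)) * ε)|
        ≤ K * ε ^ ((3 : ℝ) / 2) := by
  have hγ0 : 0 ≤ γ := hγ.1.le
  refine ⟨γ * σα ^ 2 * qs / 2 * ∫ z, deriv (deriv φ) (√qs * z) ^ 2 ∂(gaussianReal 0 1), 1,
    by positivity, one_pos, fun ε hε ↦ ?_⟩
  have hpow : ε ^ 2 ≤ ε ^ ((3 : ℝ) / 2) := by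
    rw [← Real.rpow_natCast]
    exact Real.rpow_le_rpow_of_exponent_ge hε.1 hε.2.le (by norm_num)
  exact (correlation_map_expansion_at_one_general hqs hφ hφ''growth hfix
    ⟨hε.1.le, hε.2.le.trans one_le_two⟩).trans (by gcongr)
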